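/- arXiv:2208.07490 — 5 statements merged into one kernel-verified Lean document; each statement's English description precedes it below -/
import Mathlib

section
/- Let V be a finite-dimensional real inner product space and let S1, S2, ψ1, ψ2 be linear endomorphisms of V satisfying, for all X, Z ∈ V, the identity S1X ∧ S1Z + ψ1X ∧ Z + X ∧ ψ1Z = S2X ∧ S2Z + ψ2X ∧ Z + X ∧ ψ2Z of endomorphisms of V. Then the bilinear map Θ : V × V → ℝ⁴ defined by Θ(X,Y) = (⟨S1X, Y⟩, (1/√2)⟨(id + ψ1 − ψ2)X, Y⟩, ⟨S2X, Y⟩, (1/√2)⟨(id − ψ1 + ψ2)X, Y⟩) is flat with respect to ⟨⟨·,·⟩⟩. -/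
open scoped RealInnerProductSpace

/-- The wedge product of two vectors: `(X ∧ Y) Z = ⟨Y, Z⟩ X − ⟨X, Z⟩ Y`. -/
noncomputable def wedge {V : Type*} [NormedAddCommGroup V] [InnerProductSpace ℝ V]
    (X Y : V) : V →ₗ[ℝ] V where
  toFun Z := ⟪Y, Z⟫ • X - ⟪X, Z⟫ • Y
  map_add' Z W := by
    simp only [inner_add_right, add_smul]
    abel
  map_smul' c Z := by
    simp only [real_inner_smul_right, RingHom.id_apply, smul_sub, smul_smul]

/-- The bilinear map `Θ` associated to the operators `S1, S2, ψ1, ψ2`. -/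
noncomputable def Theta {V : Type*} [NormedAddCommGroup V] [InnerProductSpace ℝ V]
    (S1 S2 ψ1 ψ2 : V →ₗ[ℝ] V) (X Y : V) : Fin 4 → ℝ :=
  ![⟪S1 X, Y⟫, (1 / Real.sqrt 2) * ⟪X + ψ1 X - ψ2 X, Y⟫,
    ⟪S2 X, Y⟫, (1 / Real.sqrt 2) * ⟪X - ψ1 X + ψ2 X, Y⟫]

/-- The bilinear form of signature (2,2) on `ℝ⁴`. -/
def bform (u v : Fin 4 → ℝ) : ℝ := u 0 * v 0 + u 1 * v 1 - u 2 * v 2 - u 3 * v 3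

/-!
Pairing `(A ∧ B) T` with `Y` gives `⟪A, Y⟫⟪B, T⟫ - ⟪A, T⟫⟪B, Y⟫`, the antisymmetrization in `Y, T`
that flatness requires to vanish. So the failure of flatness of `Θ` at `X, Y, Z, T` is a signed sum
of four wedge products. With `φ = ψ1 - ψ2`, the two products built from `id ± φ` polarize to
`φ X ∧ Z + X ∧ φ Z`, and the signed sum becomes the difference of the two sides of the Gauss
equation.
-/

section

variable {V : Type*} [NormedAddCommGroup V] [InnerProductSpace ℝ V]

theorem wedge_apply (X Y Z : V) : wedge X Y Z = ⟪Y, Z⟫ • X - ⟪X, Z⟫ • Y :=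
  rfl

theorem inner_wedge_apply (A B T Y : V) :
    ⟪wedge A B T, Y⟫ = ⟪A, Y⟫ * ⟪B, T⟫ - ⟪A, T⟫ * ⟪B, Y⟫ := by
  rw [wedge_apply, inner_sub_left, real_inner_smul_left, real_inner_smul_left,
    mul_comm ⟪B, T⟫]

theorem wedge_sub_left (A B C : V) : wedge (A - B) C = wedge A C - wedge B C := by
  ext T
  simp only [LinearMap.sub_apply, wedge_apply, inner_sub_left]
  module

theorem wedge_sub_right (A B C : V) : wedge A (B - C) = wedge A B - wedge A C := by
  ext T
  simp only [LinearMap.sub_apply, wedge_apply, inner_sub_left]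
  module

theorem wedge_add_add_sub_wedge_sub_sub (A B C D : V) :
    wedge (A + B) (C + D) - wedge (A - B) (C - D) = (2 : ℝ) • (wedge B C + wedge A D) := by
  ext T
  simp only [LinearMap.sub_apply, LinearMap.add_apply, LinearMap.smul_apply, wedge_apply,
    inner_add_left, inner_sub_left]
  module

/-- One side of the conformal Gauss equation, `S X ∧ S Z + ψ X ∧ Z + X ∧ ψ Z`: the curvature
operator of the Moebius metric when `S` is the Moebius shape operator and `ψ` the Blaschke
tensor. -/
noncomputable def gaussOperator (S ψ : V →ₗ[ℝ] V) (X Z : V) : V →ₗ[ℝ] V :=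
  wedge (S X) (S Z) + wedge (ψ X) Z + wedge X (ψ Z)

theorem gaussOperator_sub_gaussOperator (S1 S2 ψ1 ψ2 : V →ₗ[ℝ] V) (X Z : V) :
    gaussOperator S1 ψ1 X Z - gaussOperator S2 ψ2 X Z =
      wedge (S1 X) (S1 Z) - wedge (S2 X) (S2 Z) +
        (1 / 2 : ℝ) • (wedge (X + ψ1 X - ψ2 X) (Z + ψ1 Z - ψ2 Z) -
          wedge (X - ψ1 X + ψ2 X) (Z - ψ1 Z + ψ2 Z)) := by
  rw [add_sub_assoc X, add_sub_assoc Z, sub_add X, sub_add Z, wedge_add_add_sub_wedge_sub_sub,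
    wedge_sub_left, wedge_sub_right, gaussOperator, gaussOperator]
  module

theorem bform_Theta (S1 S2 ψ1 ψ2 : V →ₗ[ℝ] V) (X Y Z T : V) :
    bform (Theta S1 S2 ψ1 ψ2 X Y) (Theta S1 S2 ψ1 ψ2 Z T) =
      ⟪S1 X, Y⟫ * ⟪S1 Z, T⟫ - ⟪S2 X, Y⟫ * ⟪S2 Z, T⟫ +
        1 / 2 * (⟪X + ψ1 X - ψ2 X, Y⟫ * ⟪Z + ψ1 Z - ψ2 Z, T⟫ -
          ⟪X - ψ1 X + ψ2 X, Y⟫ * ⟪Z - ψ1 Z + ψ2 Z, T⟫) := by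
  have sq_inv_sqrt_two : (1 / √2 : ℝ) ^ 2 = 1 / 2 := by
    rw [div_pow, one_pow, Real.sq_sqrt zero_le_two]
  rw [← sq_inv_sqrt_two]
  simp only [bform, Theta, Matrix.cons_val]
  ring

theorem bform_Theta_sub_bform_Theta (S1 S2 ψ1 ψ2 : V →ₗ[ℝ] V) (X Y Z T : V) :
    bform (Theta S1 S2 ψ1 ψ2 X Y) (Theta S1 S2 ψ1 ψ2 Z T) -
        bform (Theta S1 S2 ψ1 ψ2 X T) (Theta S1 S2 ψ1 ψ2 Z Y) =
      ⟪(gaussOperator S1 ψ1 X Z - gaussOperator S2 ψ2 X Z) T, Y⟫ := by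
  rw [bform_Theta, bform_Theta, gaussOperator_sub_gaussOperator]
  simp only [LinearMap.add_apply, LinearMap.sub_apply, LinearMap.smul_apply, inner_add_left _ _ Y,
    inner_sub_left (wedge _ _ _), real_inner_smul_left, inner_wedge_apply]
  ring

theorem theta_flat_general (S1 S2 ψ1 ψ2 : V →ₗ[ℝ] V) (X Z : V) :
    gaussOperator S1 ψ1 X Z = gaussOperator S2 ψ2 X Z ↔
      ∀ Y T : V,
        bform (Theta S1 S2 ψ1 ψ2 X Y) (Theta S1 S2 ψ1 ψ2 Z T) =
          bform (Theta S1 S2 ψ1 ψ2 X T) (Theta S1 S2 ψ1 ψ2 Z Y) := by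
  rw [← sub_eq_zero, LinearMap.ext_iff]
  simp_rw [LinearMap.zero_apply, ext_iff_inner_right (E := V) ℝ, inner_zero_left,
    ← bform_Theta_sub_bform_Theta, sub_eq_zero]
  exact forall_comm

end

theorem theta_flat {V : Type*} [NormedAddCommGroup V] [InnerProductSpace ℝ V]
    [FiniteDimensional ℝ V] (S1 S2 ψ1 ψ2 : V →ₗ[ℝ] V)
    (hGauss : ∀ X Z : V,
      wedge (S1 X) (S1 Z) + wedge (ψ1 X) Z + wedge X (ψ1 Z) =
        wedge (S2 X) (S2 Z) + wedge (ψ2 X) Z + wedge X (ψ2 Z)) :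
    ∀ X Y Z T : V,
      bform (Theta S1 S2 ψ1 ψ2 X Y) (Theta S1 S2 ψ1 ψ2 Z T) =
        bform (Theta S1 S2 ψ1 ψ2 X T) (Theta S1 S2 ψ1 ψ2 Z Y) := by
  intro X Y Z T
  exact (theta_flat_general S1 S2 ψ1 ψ2 X Z).mp (hGauss X Z) Y T
end

section
/- Let V be a finite-dimensional real inner product space and let S1, S2 be linear endomorphisms of V with S1 ≠ 0 such that ⟨S1X, Y⟩·S1 = ⟨S2X, Y⟩·S2 (equality of endomorphisms of V) for all X, Y ∈ V. Then S1 = S2 or S1 = −S2. -/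
open scoped RealInnerProductSpace

/-!
If `φ` is a linear functional with `φ a • a = φ b • b`, then applying `φ` to both sides gives
`φ a ^ 2 = φ b ^ 2`, so `φ b = ± φ a`; when `φ a ≠ 0`, this scalar cancels and leaves `a = ± b`.
Here `a` and `b` are linear maps and the functionals are the matrix coefficients `T ↦ ⟪y, T x⟫`,
which separate points.
-/

section Functional

variable {R M : Type*} [CommRing R] [NoZeroDivisors R] [AddCommGroup M] [Module R M] {a b : M}

theorem dual_apply_eq_or_eq_neg_of_smul_eq_smul (φ : Module.Dual R M)
    (h : φ a • a = φ b • b) : φ a = φ b ∨ φ a = -φ b := by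
  have h_sq : φ a * φ a = φ b * φ b := by
    simpa only [map_smul, smul_eq_mul] using congrArg φ h
  exact mul_self_eq_mul_self_iff.mp h_sq

variable [Module.IsTorsionFree R M]

theorem eq_or_eq_neg_of_dual_smul_eq_smul (φ : Module.Dual R M) (ha : φ a ≠ 0)
    (h : φ a • a = φ b • b) : a = b ∨ a = -b := by
  have cancel {c : M} (hc : φ a • a = φ a • c) : a = c := smul_right_injective M ha hc
  rcases dual_apply_eq_or_eq_neg_of_smul_eq_smul φ h with h_eq | h_neg
  · exact .inl (cancel (by rw [h, h_eq]))
  · exact .inr (cancel (by rw [h, h_neg, neg_smul_neg]))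

theorem eq_or_eq_neg_of_forall_dual_smul_eq_smul {ι : Type*} (φ : ι → Module.Dual R M)
    (h_sep : ∀ m, (∀ i, φ i m = 0) → m = 0) (h : ∀ i, φ i a • a = φ i b • b) :
    a = b ∨ a = -b := by
  by_cases h_zero : ∀ i, φ i a = 0
  · have hb : ∀ i, φ i b = 0 := fun i ↦ by
      simpa [h_zero i, eq_comm] using
        dual_apply_eq_or_eq_neg_of_smul_eq_smul (φ i) (h i)
    exact .inl ((h_sep a h_zero).trans (h_sep b hb).symm)
  · obtain ⟨i, hi⟩ := not_forall.mp h_zero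
    exact eq_or_eq_neg_of_dual_smul_eq_smul (φ i) hi (h i)

end Functional

theorem smul_eq_smul_of_inner_general {𝕜 E F : Type*} [RCLike 𝕜] [AddCommMonoid E] [Module 𝕜 E]
    [NormedAddCommGroup F] [InnerProductSpace 𝕜 F] {S T : E →ₗ[𝕜] F}
    (h : ∀ x y, inner 𝕜 y (S x) • S = inner 𝕜 y (T x) • T) : S = T ∨ S = -T := by
  let coeff (p : E × F) : Module.Dual 𝕜 (E →ₗ[𝕜] F) :=
    innerₛₗ 𝕜 p.2 ∘ₗ LinearMap.applyₗ p.1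
  have coeff_separating (A : E →ₗ[𝕜] F) (hA : ∀ p, coeff p A = 0) : A = 0 :=
    LinearMap.ext fun x ↦ ext_inner_left 𝕜 fun y ↦ (hA (x, y)).trans (inner_zero_right y).symm
  exact eq_or_eq_neg_of_forall_dual_smul_eq_smul coeff coeff_separating fun p ↦ h p.1 p.2

theorem smul_eq_smul_of_inner {V : Type*} [NormedAddCommGroup V]
    [InnerProductSpace ℝ V] [FiniteDimensional ℝ V]
    (S1 S2 : V →ₗ[ℝ] V) (hS1 : S1 ≠ 0)
    (h : ∀ X Y : V, ⟪S1 X, Y⟫ • S1 = ⟪S2 X, Y⟫ • S2) :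
    S1 = S2 ∨ S1 = -S2 :=
  smul_eq_smul_of_inner_general fun X Y ↦ by
    rw [real_inner_comm, h, real_inner_comm]
end

section
/- Let V be a 2-dimensional real inner product space, let S be a self-adjoint endomorphism of V with tr S = 0, and let J be a nonzero endomorphism of V with J ∘ J = 0. If S ∘ J is self-adjoint and tr(S ∘ J) = 0, then S = 0. -/
open scoped RealInnerProductSpace

/-!
By Cayley–Hamilton, a trace-free endomorphism `T` of a plane satisfies `T² = -(det T) • id`; if `T`
is moreover symmetric and singular, then `‖T x‖² = ⟪T² x, x⟫ = 0`, so `T = 0`. As `J² = 0` makes `J`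
singular, this applies to `S ∘ J` and gives `S ∘ J = 0`. Then `(det S) • J = -S² ∘ J = 0` with
`J ≠ 0`, so `S` is singular as well, and the same fact gives `S = 0`.
-/

section CayleyHamilton

variable {R M : Type*} [CommRing R] [Nontrivial R] [AddCommGroup M] [Module R M] [Module.Free R M]

open Polynomial in
theorem charpoly_of_finrank_eq_two [Module.Finite R M] (hdim : Module.finrank R M = 2)
    (f : M →ₗ[R] M) : f.charpoly = X ^ 2 - C (LinearMap.trace R M f) * X + C f.det := by
  let b := Module.finBasisOfFinrankEq R M hdim
  rw [← f.charpoly_toMatrix b, Matrix.charpoly_fin_two, LinearMap.det_toMatrix,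
    LinearMap.trace_eq_matrix_trace R b]

theorem comp_self_of_finrank_eq_two (hdim : Module.finrank R M = 2) (f : M →ₗ[R] M) :
    f ∘ₗ f = LinearMap.trace R M f • f - f.det • LinearMap.id := by
  have : Module.Finite R M := Module.finite_of_finrank_eq_succ hdim
  have cayley_hamilton : f * f - LinearMap.trace R M f • f + f.det • 1 = 0 := by
    simpa [charpoly_of_finrank_eq_two hdim, Algebra.algebraMap_eq_smul_one, pow_two]
      using f.aeval_self_charpoly
  rwa [sub_add, sub_eq_zero] at cayley_hamilton

theorem comp_self_of_finrank_eq_two_of_trace_eq_zero (hdim : Module.finrank R M = 2)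
    {f : M →ₗ[R] M} (htr : LinearMap.trace R M f = 0) : f ∘ₗ f = -(f.det • LinearMap.id) := by
  rw [comp_self_of_finrank_eq_two hdim, htr, zero_smul, zero_sub]

end CayleyHamilton

section Symmetric

variable {𝕜 V : Type*} [RCLike 𝕜] [NormedAddCommGroup V] [InnerProductSpace 𝕜 V]

theorem eq_zero_of_isSymmetric_of_comp_self_eq_zero {T : V →ₗ[𝕜] V} (hT : T.IsSymmetric)
    (hTT : T ∘ₗ T = 0) : T = 0 := by
  ext x
  refine inner_self_eq_zero (𝕜 := 𝕜).mp ?_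
  rw [← hT, ← LinearMap.comp_apply, hTT, LinearMap.zero_apply, inner_zero_left]

theorem eq_zero_of_isSymmetric_of_trace_eq_zero_of_det_eq_zero
    (hdim : Module.finrank 𝕜 V = 2) {T : V →ₗ[𝕜] V} (hT : T.IsSymmetric)
    (htr : LinearMap.trace 𝕜 V T = 0) (hdet : T.det = 0) : T = 0 := by
  apply eq_zero_of_isSymmetric_of_comp_self_eq_zero hT
  rw [comp_self_of_finrank_eq_two_of_trace_eq_zero hdim htr, hdet, zero_smul, neg_zero]

theorem parabolic_case_forces_zero_general (hdim : Module.finrank 𝕜 V = 2) (S J : V →ₗ[𝕜] V)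
    (hsym : S.IsSymmetric) (htr : LinearMap.trace 𝕜 V S = 0) (hJ0 : J ≠ 0) (hJdet : J.det = 0)
    (hsymSJ : (S ∘ₗ J).IsSymmetric) (htrSJ : LinearMap.trace 𝕜 V (S ∘ₗ J) = 0) :
    S = 0 := by
  have hSJ : S ∘ₗ J = 0 :=
    eq_zero_of_isSymmetric_of_trace_eq_zero_of_det_eq_zero hdim hsymSJ htrSJ
      (by rw [LinearMap.det_comp, hJdet, mul_zero])
  have hdet_smul : S.det • J = 0 :=
    calc
      S.det • J = -((S ∘ₗ S) ∘ₗ J) := by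
        rw [comp_self_of_finrank_eq_two_of_trace_eq_zero hdim htr, LinearMap.neg_comp, neg_neg,
          LinearMap.smul_comp, LinearMap.id_comp]
      _ = 0 := by rw [LinearMap.comp_assoc, hSJ, LinearMap.comp_zero, neg_zero]
  have hdet : S.det = 0 := (smul_eq_zero.mp hdet_smul).resolve_right hJ0
  exact eq_zero_of_isSymmetric_of_trace_eq_zero_of_det_eq_zero hdim hsym htr hdet

end Symmetric

theorem parabolic_case_forces_zero {V : Type*} [NormedAddCommGroup V]
    [InnerProductSpace ℝ V] [FiniteDimensional ℝ V]
    (hdim : Module.finrank ℝ V = 2)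
    (S J : V →ₗ[ℝ] V) (hsym : S.IsSymmetric)
    (htr : LinearMap.trace ℝ V S = 0)
    (hJ0 : J ≠ 0) (hJ2 : J ∘ₗ J = 0)
    (hsymSJ : (S ∘ₗ J).IsSymmetric)
    (htrSJ : LinearMap.trace ℝ V (S ∘ₗ J) = 0) :
    S = 0 := by
  have hJdet : J.det = 0 := by
    rw [← mul_self_eq_zero, ← LinearMap.det_comp, hJ2, LinearMap.det_zero, hdim,
      zero_pow two_ne_zero]
  exact parabolic_case_forces_zero_general hdim S J hsym htr hJ0 hJdet hsymSJ htrSJ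
end

section
/- Let V be a 2-dimensional real inner product space, let S be a self-adjoint endomorphism of V with tr S = 0, and let J be an endomorphism of V with J ∘ J = id, J ≠ id and J ≠ −id. If S ∘ J is self-adjoint and tr(S ∘ J) = 0, then S = 0. -/
open scoped RealInnerProductSpace

/-!
Let `μ` be a real eigenvalue of `J` and put `N = J - μ`, which is neither injective nor zero.
The operator `S ∘ N = S ∘ J - μ S` is again symmetric of trace zero, and in dimension two it has
rank at most one because `N` has a kernel. A rank-one operator satisfies `T² = (tr T) T`, so a
symmetric one of trace zero is nilpotent and semisimple, hence zero. Thus `S ∘ N = 0`, so `S`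
vanishes on the nonzero range of `N`, and the same argument applied to `S` gives `S = 0`.
An involution `J ≠ -id` has the eigenvalue `1`, with eigenvector `J v + v` whenever `J v ≠ -v`.
-/

open Module

section Field

variable {K V W : Type*} [Field K] [AddCommGroup V] [Module K V] [AddCommGroup W] [Module K W]

theorem exists_eq_smulRight_of_finrank_range_le_one {T : V →ₗ[K] W}
    [FiniteDimensional K (LinearMap.range T)] (hT : finrank K (LinearMap.range T) ≤ 1) :
    ∃ (f : Dual K V) (w : W), T = f.smulRight w := by
  obtain ⟨w, hw⟩ := ((LinearMap.range T).finrank_le_one_iff_isPrincipal.mp hT).principal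
  have hrange (x : V) : ∃ c : K, c • w = T x :=
    Submodule.mem_span_singleton.mp (hw ▸ LinearMap.mem_range_self T x)
  rcases eq_or_ne w 0 with rfl | hw0
  · exact ⟨0, 0, LinearMap.ext fun x ↦ by simpa [eq_comm] using hrange x⟩
  · choose c hc using hrange
    have hinj : Function.Injective fun a : K ↦ a • w := smul_left_injective K hw0
    exact ⟨{ toFun := c
             map_add' := fun x y ↦ hinj (by simp only [hc, add_smul, map_add])
             map_smul' := fun a x ↦ hinj (by
               simp only [hc, map_smul, smul_eq_mul, mul_smul, RingHom.id_apply]) },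
      w, LinearMap.ext fun x ↦ (hc x).symm⟩

theorem mul_self_eq_trace_smul_of_finrank_range_le_one [FiniteDimensional K V] {T : End K V}
    (hT : finrank K (LinearMap.range T) ≤ 1) : T * T = LinearMap.trace K V T • T := by
  obtain ⟨f, v, rfl⟩ := exists_eq_smulRight_of_finrank_range_le_one hT
  ext x
  simp [LinearMap.trace_smulRight, smul_smul, mul_comm]

theorem eq_zero_of_isSemisimple_of_trace_eq_zero_of_finrank_range_le_one [FiniteDimensional K V]
    {T : End K V} (hss : T.IsSemisimple) (htr : LinearMap.trace K V T = 0)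
    (hT : finrank K (LinearMap.range T) ≤ 1) : T = 0 := by
  refine End.eq_zero_of_isNilpotent_isSemisimple ⟨2, ?_⟩ hss
  rw [pow_two, mul_self_eq_trace_smul_of_finrank_range_le_one hT, htr, zero_smul]

theorem finrank_range_lt_finrank_of_ker_ne_bot [FiniteDimensional K V] {T : V →ₗ[K] W}
    (hT : LinearMap.ker T ≠ ⊥) : finrank K (LinearMap.range T) < finrank K V := by
  have hker : 1 ≤ finrank K (LinearMap.ker T) := Submodule.one_le_finrank_iff.mpr hT
  have := T.finrank_range_add_finrank_ker
  lia

end Field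

theorem hasEigenvalue_one_of_comp_self_eq_id {R M : Type*} [CommRing R] [AddCommGroup M]
    [Module R M] {J : M →ₗ[R] M} (hJ : J ∘ₗ J = LinearMap.id) (hneg : J ≠ -LinearMap.id) :
    End.HasEigenvalue J 1 := by
  obtain ⟨v, hv⟩ : ∃ v, J v ≠ -v := by
    by_contra! h
    exact hneg (LinearMap.ext h)
  have hJJ : J (J v) = v := LinearMap.congr_fun hJ v
  refine End.hasEigenvalue_of_hasEigenvector (x := J v + v) (End.hasEigenvector_iff.mpr ⟨?_, ?_⟩)
  · rw [End.mem_eigenspace_iff, map_add, hJJ, one_smul, add_comm]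
  · rwa [Ne, ← eq_neg_iff_add_eq_zero]

section RCLike

variable {𝕜 V : Type*} [RCLike 𝕜] [NormedAddCommGroup V] [InnerProductSpace 𝕜 V]
  [FiniteDimensional 𝕜 V]

theorem eq_zero_of_isSymmetric_of_trace_eq_zero_of_ker_ne_bot (hdim : finrank 𝕜 V ≤ 2)
    {T : V →ₗ[𝕜] V} (hsym : T.IsSymmetric) (htr : LinearMap.trace 𝕜 V T = 0)
    (hker : LinearMap.ker T ≠ ⊥) : T = 0 :=
  eq_zero_of_isSemisimple_of_trace_eq_zero_of_finrank_range_le_one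
    (End.isFinitelySemisimple_iff_isSemisimple.mp hsym.isFinitelySemisimple) htr
    (Nat.le_of_lt_succ ((finrank_range_lt_finrank_of_ker_ne_bot hker).trans_le hdim))

theorem hyperbolic_case_forces_zero_general (hdim : finrank 𝕜 V ≤ 2) (S J : V →ₗ[𝕜] V)
    (hsym : S.IsSymmetric) (htr : LinearMap.trace 𝕜 V S = 0) (μ : ℝ)
    (hμ : End.HasEigenvalue J (μ : 𝕜)) (hJ : J ≠ (μ : 𝕜) • LinearMap.id)
    (hsymSJ : (S ∘ₗ J).IsSymmetric) (htrSJ : LinearMap.trace 𝕜 V (S ∘ₗ J) = 0) :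
    S = 0 := by
  let N : V →ₗ[𝕜] V := J - (μ : 𝕜) • LinearMap.id
  have hSN : S ∘ₗ N = S ∘ₗ J - (μ : 𝕜) • S := by
    rw [LinearMap.comp_sub, LinearMap.comp_smul, LinearMap.comp_id]
  have hSN_zero : S ∘ₗ N = 0 := by
    refine eq_zero_of_isSymmetric_of_trace_eq_zero_of_ker_ne_bot hdim ?_ ?_ ?_
    · exact hSN ▸ hsymSJ.sub (hsym.smul (RCLike.conj_ofReal μ))
    · rw [hSN, map_sub, map_smul, htrSJ, htr, smul_zero, sub_zero]
    · have hN_ker : LinearMap.ker N ≠ ⊥ := by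
        rwa [End.hasEigenvalue_iff, End.eigenspace_def] at hμ
      exact ne_bot_of_le_ne_bot hN_ker (LinearMap.ker_le_ker_comp N S)
  refine eq_zero_of_isSymmetric_of_trace_eq_zero_of_ker_ne_bot hdim hsym htr fun hS_ker ↦ ?_
  have hN_range : LinearMap.range N ≤ ⊥ := hS_ker ▸ LinearMap.range_le_ker_iff.mpr hSN_zero
  exact hJ (sub_eq_zero.mp (LinearMap.range_eq_bot.mp (le_bot_iff.mp hN_range)))

end RCLike

theorem hyperbolic_case_forces_zero {V : Type*} [NormedAddCommGroup V]
    [InnerProductSpace ℝ V] [FiniteDimensional ℝ V]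
    (hdim : Module.finrank ℝ V = 2)
    (S J : V →ₗ[ℝ] V) (hsym : S.IsSymmetric)
    (htr : LinearMap.trace ℝ V S = 0)
    (hJ2 : J ∘ₗ J = LinearMap.id) (hJid : J ≠ LinearMap.id) (hJnegid : J ≠ -LinearMap.id)
    (hsymSJ : (S ∘ₗ J).IsSymmetric)
    (htrSJ : LinearMap.trace ℝ V (S ∘ₗ J) = 0) :
    S = 0 :=
  hyperbolic_case_forces_zero_general hdim.le S J hsym htr 1
    (hasEigenvalue_one_of_comp_self_eq_id hJ2 hJnegid) (by simpa using hJid) hsymSJ htrSJ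
end

section
/- Let V be a real inner product space of finite dimension n ≥ 3 and let S1, S2 be self-adjoint endomorphisms of V with tr S1 = 0 = tr S2, tr(S1²) = tr(S2²), S1 ≠ 0, S1 ≠ S2 and S1 ≠ −S2. Set B = (1/(n−2))·(S1² − S2²). Suppose a nonzero vector T ∈ V satisfies, for every X ∈ V, the identity ⟨S1X, T⟩·S1 − ⟨S2X, T⟩·S2 + ⟨BX, T⟩·id + ⟨X, T⟩·B = 0 of endomorphisms of V. Then T is an eigenvector of both S1 and S2, and the corresponding eigenvalues μ1 and μ2 satisfy μ1² = μ2². -/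
open scoped RealInnerProductSpace

/-!
Taking traces removes the identity term, so `⟪B X, T⟫ = 0` for all `X`. For `X ⟂ T` what is left is
`⟪X, S₁ T⟫ • S₁ = ⟪X, S₂ T⟫ • S₂`; as `S₁` and `S₂` are linearly independent, `S₁ T` and `S₂ T` are
orthogonal to everything orthogonal to `T`, i.e. are multiples `μ₁ • T` and `μ₂ • T`. Putting
`X = T`, applying the resulting operator to `T` and pairing with `T` gives `μ₁ ^ 2 = μ₂ ^ 2`.

Linear independence holds because equality of the nonzero traces of `S₁ ^ 2` and `S₂ ^ 2` forces
`c ^ 2 = 1` in any relation `S₂ = c • S₁`.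
-/

section Trace

lemma linearIndependent_pair_of_trace_sq_eq {K V : Type*} [Field K] [AddCommGroup V] [Module K V]
    {f g : V →ₗ[K] V} (htr : LinearMap.trace K V (f ∘ₗ f) = LinearMap.trace K V (g ∘ₗ g))
    (htr_ne : LinearMap.trace K V (f ∘ₗ f) ≠ 0) (hne : f ≠ g) (hne_neg : f ≠ -g) :
    LinearIndependent K ![f, g] := by
  have hf : f ≠ 0 := by
    rintro rfl
    simp at htr_ne
  refine (LinearIndependent.pair_iff' hf).2 fun c hc => ?_
  have hc_sq : c * c = 1 := by
    rw [← hc, LinearMap.smul_comp, LinearMap.comp_smul, smul_smul, map_smul, smul_eq_mul] at htr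
    exact (mul_eq_right₀ htr_ne).1 htr.symm
  rcases mul_self_eq_one_iff.1 hc_sq with rfl | rfl
  · exact hne (by rw [← hc, one_smul])
  · exact hne_neg (by rw [← hc, neg_one_smul, neg_neg])

variable {𝕜 E F : Type*} [RCLike 𝕜]
  [NormedAddCommGroup E] [InnerProductSpace 𝕜 E] [FiniteDimensional 𝕜 E]
  [NormedAddCommGroup F] [InnerProductSpace 𝕜 F] [FiniteDimensional 𝕜 F]

open scoped ComplexOrder in
lemma trace_adjoint_comp_self_eq_zero_iff {A : E →ₗ[𝕜] F} :
    LinearMap.trace 𝕜 E (A.adjoint ∘ₗ A) = 0 ↔ A = 0 := by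
  let b := stdOrthonormalBasis 𝕜 E
  let c := stdOrthonormalBasis 𝕜 F
  rw [LinearMap.trace_eq_matrix_trace 𝕜 b.toBasis, LinearMap.toMatrix_comp _ c.toBasis,
    LinearMap.toMatrix_adjoint, Matrix.trace_conjTranspose_mul_self_eq_zero_iff,
    LinearEquiv.map_eq_zero_iff]

lemma trace_comp_self_eq_zero_iff_of_isSymmetric {S : E →ₗ[𝕜] E} (hS : S.IsSymmetric) :
    LinearMap.trace 𝕜 E (S ∘ₗ S) = 0 ↔ S = 0 := by
  rw [← trace_adjoint_comp_self_eq_zero_iff, ← (LinearMap.eq_adjoint_iff S S).2 hS]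

end Trace

section InnerProductSpace

variable {𝕜 E : Type*} [RCLike 𝕜] [NormedAddCommGroup E] [InnerProductSpace 𝕜 E]

lemma mem_span_singleton_of_forall_inner_eq_zero {T Y : E}
    (h : ∀ X, inner 𝕜 X T = 0 → inner 𝕜 X Y = 0) : Y ∈ Submodule.span 𝕜 {T} := by
  rw [← Submodule.orthogonal_orthogonal (Submodule.span 𝕜 {T}), Submodule.mem_orthogonal]
  exact fun X hX => h X (Submodule.mem_orthogonal_singleton_iff_inner_left.1 hX)

lemma mem_span_singleton_of_inner_smul_eq_inner_smul {M : Type*} [AddCommGroup M] [Module 𝕜 M]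
    {A₁ A₂ : M} (hA : LinearIndependent 𝕜 ![A₁, A₂]) {T Y₁ Y₂ : E}
    (h : ∀ X, inner 𝕜 X T = 0 → inner 𝕜 X Y₁ • A₁ = inner 𝕜 X Y₂ • A₂) :
    Y₁ ∈ Submodule.span 𝕜 {T} ∧ Y₂ ∈ Submodule.span 𝕜 {T} := by
  have hcoeff (X : E) (hX : inner 𝕜 X T = 0) : inner 𝕜 X Y₁ = 0 ∧ -inner 𝕜 X Y₂ = 0 :=
    LinearIndependent.pair_iff.1 hA _ _ (by rw [h X hX, neg_smul, add_neg_cancel])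
  exact ⟨mem_span_singleton_of_forall_inner_eq_zero fun X hX => (hcoeff X hX).1,
    mem_span_singleton_of_forall_inner_eq_zero fun X hX => neg_eq_zero.1 (hcoeff X hX).2⟩

theorem common_eigenvector_of_flatness_identity_general [FiniteDimensional 𝕜 E]
    {S₁ S₂ B : E →ₗ[𝕜] E} (hsymm₁ : S₁.IsSymmetric) (hsymm₂ : S₂.IsSymmetric)
    (hind : LinearIndependent 𝕜 ![S₁, S₂]) (htr₁ : LinearMap.trace 𝕜 E S₁ = 0)
    (htr₂ : LinearMap.trace 𝕜 E S₂ = 0) (htrB : LinearMap.trace 𝕜 E B = 0)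
    {T : E} (hT : T ≠ 0)
    (hident : ∀ X : E, inner 𝕜 (S₁ X) T • S₁ - inner 𝕜 (S₂ X) T • S₂
      + inner 𝕜 (B X) T • LinearMap.id + inner 𝕜 X T • B = 0) :
    ∃ μ₁ μ₂ : 𝕜, S₁ T = μ₁ • T ∧ S₂ T = μ₂ • T ∧ μ₁ ^ 2 = μ₂ ^ 2 := by
  have : Nontrivial E := nontrivial_of_ne T 0 hT
  have hBT (X : E) : inner 𝕜 (B X) T = 0 := by
    simpa [htr₁, htr₂, htrB, Module.finrank_pos.ne'] using
      congrArg (LinearMap.trace 𝕜 E) (hident X)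
  have hreduced (X : E) :
      inner 𝕜 X (S₁ T) • S₁ - inner 𝕜 X (S₂ T) • S₂ + inner 𝕜 X T • B = 0 := by
    simpa only [hBT, zero_smul, add_zero, hsymm₁ X T, hsymm₂ X T] using hident X
  have hspan : S₁ T ∈ Submodule.span 𝕜 {T} ∧ S₂ T ∈ Submodule.span 𝕜 {T} :=
    mem_span_singleton_of_inner_smul_eq_inner_smul hind fun X hX => by
      simpa only [hX, zero_smul, add_zero, sub_eq_zero] using hreduced X
  obtain ⟨μ₁, hμ₁⟩ := Submodule.mem_span_singleton.1 hspan.1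
  obtain ⟨μ₂, hμ₂⟩ := Submodule.mem_span_singleton.1 hspan.2
  refine ⟨μ₁, μ₂, hμ₁.symm, hμ₂.symm, ?_⟩
  have hTT : inner 𝕜 T T ≠ 0 := inner_self_ne_zero.2 hT
  have hTB : inner 𝕜 T (B T) = 0 := inner_eq_zero_symm.1 (hBT T)
  have hpaired :
      μ₁ * inner 𝕜 T T * (μ₁ * inner 𝕜 T T) - μ₂ * inner 𝕜 T T * (μ₂ * inner 𝕜 T T) = 0 := by
    simpa only [← hμ₁, ← hμ₂, LinearMap.add_apply, LinearMap.sub_apply, LinearMap.smul_apply,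
      LinearMap.zero_apply, inner_add_right, inner_sub_right, inner_smul_right, inner_zero_right,
      hTB, mul_zero, add_zero] using
      congrArg (fun A : E →ₗ[𝕜] E => inner 𝕜 T (A T)) (hreduced T)
  refine mul_right_cancel₀ (pow_ne_zero 2 hTT) ?_
  linear_combination hpaired

end InnerProductSpace

theorem common_eigenvector_of_flatness_identity {V : Type*} [NormedAddCommGroup V]
    [InnerProductSpace ℝ V] [FiniteDimensional ℝ V] {n : ℕ}
    (hn : 3 ≤ n) (hdim : Module.finrank ℝ V = n)
    (S1 S2 : V →ₗ[ℝ] V) (hsym1 : S1.IsSymmetric) (hsym2 : S2.IsSymmetric)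
    (htr1 : LinearMap.trace ℝ V S1 = 0) (htr2 : LinearMap.trace ℝ V S2 = 0)
    (htrsq : LinearMap.trace ℝ V (S1 ∘ₗ S1) = LinearMap.trace ℝ V (S2 ∘ₗ S2))
    (hS1 : S1 ≠ 0) (hne : S1 ≠ S2) (hne' : S1 ≠ -S2)
    (B : V →ₗ[ℝ] V) (hB : B = (1 / ((n : ℝ) - 2)) • (S1 ∘ₗ S1 - S2 ∘ₗ S2))
    (T : V) (hT : T ≠ 0)
    (hident : ∀ X : V,
      ⟪S1 X, T⟫ • S1 - ⟪S2 X, T⟫ • S2 + ⟪B X, T⟫ • LinearMap.id + ⟪X, T⟫ • B = 0) :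
    ∃ μ1 μ2 : ℝ, S1 T = μ1 • T ∧ S2 T = μ2 • T ∧ μ1 ^ 2 = μ2 ^ 2 := by
  have htrsq_ne := (trace_comp_self_eq_zero_iff_of_isSymmetric hsym1).not.2 hS1
  exact common_eigenvector_of_flatness_identity_general hsym1 hsym2
    (linearIndependent_pair_of_trace_sq_eq htrsq htrsq_ne hne hne') htr1 htr2
    (by rw [hB, map_smul, map_sub, htrsq, sub_self, smul_zero]) hT hident
end
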